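/- Under the deep-GP marginalisation setup with the additional definitions below, for every l ∈ {1, …, L} the block matrix Γ^l := [[Σ̂^l, Σ̂_{nM}^{(l)}], [(Σ̂_{nM}^{(l)})ᵀ, Σ̂_M^{(l)}]] is symmetric positive definite, and for all f^1, …, f^L and all f_M^{l+1} ∈ ℝ^{m_{l+1}}, …, f_M^L ∈ ℝ^{m_L}: ∫_{ℝ^{m_1+…+m_l}} N(f_M; μ_M, S_M) · ∏_{l'=1}^{l} N(f^{l'}; A^{l'}(f^{l'−1}) f_M^{l'}, B^{l'}(f^{l'−1})) df_M^1 ⋯ df_M^l = [∏_{l'=1}^{l−1} N(f^{l'}; μ̂^{l'}, Σ̂^{l'})] · N((f^l, f_M^{l+1}, …, f_M^L); (μ̂^l, μ̂_M^{(l)}), Γ^l). (Lemma 1 of the paper: the inducing outputs of layers 1, …, l can be integrated out, yielding the stated product of Gaussian conditionals times an explicit joint Gaussian in (f^l, f_M^{l+1:L}).) -/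

import Mathlib

open Matrix MeasureTheory Real

noncomputable section

/-- The multivariate Gaussian density
`N(x; μ, S) = (2π)^{−d/2} (det S)^{−1/2} exp(−(1/2)(x−μ)ᵀ S⁻¹ (x−μ))`. -/
def gaussPDF {ι : Type*} [Fintype ι] [DecidableEq ι]
    (μ : ι → ℝ) (S : Matrix ι ι ℝ) (x : ι → ℝ) : ℝ :=
  (2 * Real.pi) ^ (-(Fintype.card ι : ℝ) / 2) * S.det ^ (-(1 : ℝ) / 2) *
    Real.exp (-(1 / 2 : ℝ) * ((x - μ) ⬝ᵥ (S⁻¹ *ᵥ (x - μ))))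

variable {L : ℕ}

/-- Indices lying in layers strictly before layer `l`. -/
abbrev Below (d : Fin L → ℕ) (l : Fin L) : Type :=
  {p : (i : Fin L) × Fin (d i) // p.1 < l}

/-- The block submatrix `S^{1:l−1,1:l−1}`. -/
def prevBlock {d : Fin L → ℕ}
    (S : Matrix ((i : Fin L) × Fin (d i)) ((i : Fin L) × Fin (d i)) ℝ) (l : Fin L) :
    Matrix (Below d l) (Below d l) ℝ :=
  Matrix.of fun p q => S p.val q.val

/-- The block row `S^{l,1:l−1}`. -/
def rowBlock {d : Fin L → ℕ}
    (S : Matrix ((i : Fin L) × Fin (d i)) ((i : Fin L) × Fin (d i)) ℝ) (l : Fin L) :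
    Matrix (Fin (d l)) (Below d l) ℝ :=
  Matrix.of fun i q => S ⟨l, i⟩ q.val

/-- The block column `S^{1:l−1,l}`. -/
def colBlock {d : Fin L → ℕ}
    (S : Matrix ((i : Fin L) × Fin (d i)) ((i : Fin L) × Fin (d i)) ℝ) (l : Fin L) :
    Matrix (Below d l) (Fin (d l)) ℝ :=
  Matrix.of fun p j => S p.val ⟨l, j⟩

/-- The diagonal block `S^{ll}`. -/
def diagBlock {d : Fin L → ℕ}
    (S : Matrix ((i : Fin L) × Fin (d i)) ((i : Fin L) × Fin (d i)) ℝ) (l : Fin L) :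
    Matrix (Fin (d l)) (Fin (d l)) ℝ :=
  Matrix.of fun i j => S ⟨l, i⟩ ⟨l, j⟩

/-- The subvector `x^{1:l−1}`. -/
def belowVec {d : Fin L → ℕ} (x : ((i : Fin L) × Fin (d i)) → ℝ) (l : Fin L) :
    Below d l → ℝ := fun p => x p.val

/-- The subvector `x^l`. -/
def blockVec {d : Fin L → ℕ} (x : ((i : Fin L) × Fin (d i)) → ℝ) (l : Fin L) :
    Fin (d l) → ℝ := fun i => x ⟨l, i⟩

/-- `μ̂^l = μ̃^l + S̃^{l,1:l−1}(S̃^{1:l−1,1:l−1})⁻¹(f^{1:l−1} − μ̃^{1:l−1})`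
(for `l = 1` the correction term is a sum over the empty index set). -/
def muHat {d : Fin L → ℕ} (μ : ((i : Fin L) × Fin (d i)) → ℝ)
    (S : Matrix ((i : Fin L) × Fin (d i)) ((i : Fin L) × Fin (d i)) ℝ)
    (f : ((i : Fin L) × Fin (d i)) → ℝ) (l : Fin L) : Fin (d l) → ℝ :=
  blockVec μ l + rowBlock S l *ᵥ ((prevBlock S l)⁻¹ *ᵥ (belowVec f l - belowVec μ l))

/-- `Σ̂^l = S̃^{ll} − S̃^{l,1:l−1}(S̃^{1:l−1,1:l−1})⁻¹S̃^{1:l−1,l}` (for `l = 1`,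
`Σ̂^1 = S̃^{11}`). -/
def sigmaHat {d : Fin L → ℕ}
    (S : Matrix ((i : Fin L) × Fin (d i)) ((i : Fin L) × Fin (d i)) ℝ) (l : Fin L) :
    Matrix (Fin (d l)) (Fin (d l)) ℝ :=
  diagBlock S l - rowBlock S l * (prevBlock S l)⁻¹ * colBlock S l

/-- The block `S_M^{ll'}` of the inducing-output covariance pairing layers `l` and `l'`. -/
def SMblock {m : Fin L → ℕ}
    (SM : Matrix ((i : Fin L) × Fin (m i)) ((i : Fin L) × Fin (m i)) ℝ) (l l' : Fin L) :
    Matrix (Fin (m l)) (Fin (m l')) ℝ :=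
  Matrix.of fun a b => SM ⟨l, a⟩ ⟨l', b⟩

/-- `μ̃^l := A^l(f^{l−1}) μ_M^l`, collected into one layered vector. -/
def muTilde (T : Fin (L + 1) → ℕ) (m : Fin L → ℕ)
    (A : ∀ l : Fin L, (Fin (T l.castSucc) → ℝ) → Matrix (Fin (T l.succ)) (Fin (m l)) ℝ)
    (μM : ((i : Fin L) × Fin (m i)) → ℝ) (f : ∀ l : Fin (L + 1), Fin (T l) → ℝ) :
    ((l : Fin L) × Fin (T l.succ)) → ℝ :=
  fun p => (A p.1 (f p.1.castSucc) *ᵥ fun a => μM ⟨p.1, a⟩) p.2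

/-- `S̃^{ll'} := δ_{ll'} B^l(f^{l−1}) + A^l(f^{l−1}) S_M^{ll'} A^{l'}(f^{l'−1})ᵀ`,
collected into one layered matrix. -/
def Stilde (T : Fin (L + 1) → ℕ) (m : Fin L → ℕ)
    (A : ∀ l : Fin L, (Fin (T l.castSucc) → ℝ) → Matrix (Fin (T l.succ)) (Fin (m l)) ℝ)
    (B : ∀ l : Fin L, (Fin (T l.castSucc) → ℝ) → Matrix (Fin (T l.succ)) (Fin (T l.succ)) ℝ)
    (SM : Matrix ((i : Fin L) × Fin (m i)) ((i : Fin L) × Fin (m i)) ℝ)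
    (f : ∀ l : Fin (L + 1), Fin (T l) → ℝ) :
    Matrix ((l : Fin L) × Fin (T l.succ)) ((l : Fin L) × Fin (T l.succ)) ℝ :=
  Matrix.of fun p q =>
    (if h : p.1 = q.1 then
        B p.1 (f p.1.castSucc) p.2 (Fin.cast (show T q.1.succ = T p.1.succ by rw [h]) q.2)
      else 0) +
      (A p.1 (f p.1.castSucc) * SMblock SM p.1 q.1 * (A q.1 (f q.1.castSucc))ᵀ) p.2 q.2


/-- Inducing-output indices lying in layers strictly after layer `l`. -/
abbrev AboveM (m : Fin L → ℕ) (l : Fin L) : Type :=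
  {k : (i : Fin L) × Fin (m i) // l < k.1}

/-- Inducing-output indices lying in layers up to (and including) layer `l`. -/
abbrev UptoM (m : Fin L → ℕ) (l : Fin L) : Type :=
  {k : (i : Fin L) × Fin (m i) // k.1 ≤ l}

/-- `D_{l−1} = blockdiag(A^1(f^0), …, A^{l−1}(f^{l−2}))`. -/
def Dmat (T : Fin (L + 1) → ℕ) (m : Fin L → ℕ)
    (A : ∀ l : Fin L, (Fin (T l.castSucc) → ℝ) → Matrix (Fin (T l.succ)) (Fin (m l)) ℝ)
    (f : ∀ l : Fin (L + 1), Fin (T l) → ℝ) (l : Fin L) :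
    Matrix (Below (fun i => T i.succ) l) (Below m l) ℝ :=
  Matrix.of fun p k =>
    if h : p.val.1 = k.val.1 then
      A p.val.1 (f p.val.1.castSucc) p.val.2
        (Fin.cast (show m k.val.1 = m p.val.1 by rw [h]) k.val.2)
    else 0

/-- `S_M^{l+1:L,1:l−1}`. -/
def SMab {m : Fin L → ℕ}
    (SM : Matrix ((i : Fin L) × Fin (m i)) ((i : Fin L) × Fin (m i)) ℝ) (l : Fin L) :
    Matrix (AboveM m l) (Below m l) ℝ :=
  Matrix.of fun a b => SM a.val b.val

/-- `S_M^{1:l−1,l+1:L}`. -/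
def SMba {m : Fin L → ℕ}
    (SM : Matrix ((i : Fin L) × Fin (m i)) ((i : Fin L) × Fin (m i)) ℝ) (l : Fin L) :
    Matrix (Below m l) (AboveM m l) ℝ :=
  Matrix.of fun b a => SM b.val a.val

/-- `S_M^{l+1:L,l+1:L}`. -/
def SMaa {m : Fin L → ℕ}
    (SM : Matrix ((i : Fin L) × Fin (m i)) ((i : Fin L) × Fin (m i)) ℝ) (l : Fin L) :
    Matrix (AboveM m l) (AboveM m l) ℝ :=
  Matrix.of fun a a' => SM a.val a'.val

/-- `S_M^{l,l+1:L}`. -/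
def SMla {m : Fin L → ℕ}
    (SM : Matrix ((i : Fin L) × Fin (m i)) ((i : Fin L) × Fin (m i)) ℝ) (l : Fin L) :
    Matrix (Fin (m l)) (AboveM m l) ℝ :=
  Matrix.of fun i a => SM ⟨l, i⟩ a.val

/-- `μ̂_M^{(l)} = μ_M^{l+1:L}
  + S_M^{l+1:L,1:l−1} D_{l−1}ᵀ (S̃^{1:l−1,1:l−1})⁻¹ (f^{1:l−1} − μ̃^{1:l−1})`. -/
def muHatM (T : Fin (L + 1) → ℕ) (m : Fin L → ℕ)
    (A : ∀ l : Fin L, (Fin (T l.castSucc) → ℝ) → Matrix (Fin (T l.succ)) (Fin (m l)) ℝ)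
    (B : ∀ l : Fin L, (Fin (T l.castSucc) → ℝ) → Matrix (Fin (T l.succ)) (Fin (T l.succ)) ℝ)
    (SM : Matrix ((i : Fin L) × Fin (m i)) ((i : Fin L) × Fin (m i)) ℝ)
    (μM : ((i : Fin L) × Fin (m i)) → ℝ)
    (f : ∀ l : Fin (L + 1), Fin (T l) → ℝ) (l : Fin L) : AboveM m l → ℝ :=
  (fun a => μM a.val) +
    (SMab SM l * (Dmat T m A f l)ᵀ) *ᵥ
      ((prevBlock (Stilde T m A B SM f) l)⁻¹ *ᵥ
        (belowVec (fun p => f p.1.succ p.2) l - belowVec (muTilde T m A μM f) l))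

/-- `Σ̂_M^{(l)} = S_M^{l+1:L,l+1:L}
  − S_M^{l+1:L,1:l−1} D_{l−1}ᵀ (S̃^{1:l−1,1:l−1})⁻¹ D_{l−1} S_M^{1:l−1,l+1:L}`. -/
def sigHatM (T : Fin (L + 1) → ℕ) (m : Fin L → ℕ)
    (A : ∀ l : Fin L, (Fin (T l.castSucc) → ℝ) → Matrix (Fin (T l.succ)) (Fin (m l)) ℝ)
    (B : ∀ l : Fin L, (Fin (T l.castSucc) → ℝ) → Matrix (Fin (T l.succ)) (Fin (T l.succ)) ℝ)
    (SM : Matrix ((i : Fin L) × Fin (m i)) ((i : Fin L) × Fin (m i)) ℝ)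
    (f : ∀ l : Fin (L + 1), Fin (T l) → ℝ) (l : Fin L) :
    Matrix (AboveM m l) (AboveM m l) ℝ :=
  SMaa SM l -
    SMab SM l * (Dmat T m A f l)ᵀ * (prevBlock (Stilde T m A B SM f) l)⁻¹ *
      Dmat T m A f l * SMba SM l

/-- `Σ̂_{nM}^{(l)} = A^l(f^{l−1}) S_M^{l,l+1:L}
  − S̃^{l,1:l−1} (S̃^{1:l−1,1:l−1})⁻¹ D_{l−1} S_M^{1:l−1,l+1:L}`. -/
def sigHatNM (T : Fin (L + 1) → ℕ) (m : Fin L → ℕ)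
    (A : ∀ l : Fin L, (Fin (T l.castSucc) → ℝ) → Matrix (Fin (T l.succ)) (Fin (m l)) ℝ)
    (B : ∀ l : Fin L, (Fin (T l.castSucc) → ℝ) → Matrix (Fin (T l.succ)) (Fin (T l.succ)) ℝ)
    (SM : Matrix ((i : Fin L) × Fin (m i)) ((i : Fin L) × Fin (m i)) ℝ)
    (f : ∀ l : Fin (L + 1), Fin (T l) → ℝ) (l : Fin L) :
    Matrix (Fin (T l.succ)) (AboveM m l) ℝ :=
  A l (f l.castSucc) * SMla SM l -
    rowBlock (Stilde T m A B SM f) l * (prevBlock (Stilde T m A B SM f) l)⁻¹ *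
      Dmat T m A f l * SMba SM l

/-- `Γ^l = [[Σ̂^l, Σ̂_{nM}^{(l)}], [(Σ̂_{nM}^{(l)})ᵀ, Σ̂_M^{(l)}]]`. -/
def Gam (T : Fin (L + 1) → ℕ) (m : Fin L → ℕ)
    (A : ∀ l : Fin L, (Fin (T l.castSucc) → ℝ) → Matrix (Fin (T l.succ)) (Fin (m l)) ℝ)
    (B : ∀ l : Fin L, (Fin (T l.castSucc) → ℝ) → Matrix (Fin (T l.succ)) (Fin (T l.succ)) ℝ)
    (SM : Matrix ((i : Fin L) × Fin (m i)) ((i : Fin L) × Fin (m i)) ℝ)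
    (f : ∀ l : Fin (L + 1), Fin (T l) → ℝ) (l : Fin L) :
    Matrix (Fin (T l.succ) ⊕ AboveM m l) (Fin (T l.succ) ⊕ AboveM m l) ℝ :=
  Matrix.fromBlocks (sigmaHat (Stilde T m A B SM f) l) (sigHatNM T m A B SM f l)
    (sigHatNM T m A B SM f l)ᵀ (sigHatM T m A B SM f l)

/-- Reassemble a full inducing-output vector from its part on layers `1, …, l` and its
part on layers `l+1, …, L`. -/
def combineInd (m : Fin L → ℕ) (l : Fin L) (x : UptoM m l → ℝ) (y : AboveM m l → ℝ) :
    ((i : Fin L) × Fin (m i)) → ℝ :=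
  fun k => if h : k.1 ≤ l then x ⟨k, h⟩ else y ⟨k, not_le.mp h⟩

theorem posDef_symm_aux {ι : Type*} [Fintype ι] {S : Matrix ι ι ℝ} (h : S.PosDef) : Sᵀ = S := by
  have := h.isHermitian
  rwa [Matrix.IsHermitian, conjTranspose_eq_transpose_of_trivial] at this

theorem gaussPDF_reindex {ι κ : Type*} [Fintype ι] [DecidableEq ι] [Fintype κ] [DecidableEq κ]
    (e : ι ≃ κ) (μ : κ → ℝ) (S : Matrix κ κ ℝ) (x : κ → ℝ) :
    gaussPDF (fun i => μ (e i)) (S.submatrix e e) (fun i => x (e i)) = gaussPDF μ S x := by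
  unfold gaussPDF
  rw [Fintype.card_congr e, Matrix.det_submatrix_equiv_self, Matrix.inv_submatrix_equiv]
  congr 3
  have h1 : ((fun i => x (e i)) - fun i => μ (e i)) = (x - μ) ∘ e := rfl
  rw [h1, Matrix.submatrix_mulVec_equiv]
  have : ((x - μ) ∘ ⇑e) ∘ ⇑e.symm = x - μ := by ext; simp
  rw [this]
  exact comp_equiv_dotProduct_comp_equiv (x - μ) (S⁻¹ *ᵥ (x-μ)) e

open scoped MatrixOrder in
theorem gaussPDF_integral {ι : Type*} [Fintype ι] [DecidableEq ι]
    (μ : ι → ℝ) (S : Matrix ι ι ℝ) (hS : S.PosDef) : ∫ x, gaussPDF μ S x = 1 := by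
  obtain ⟨M, hM⟩ : ∃ M : Matrix ι ι ℝ, S⁻¹ = Mᵀ * M := by
    obtain ⟨X, hX, -, h⟩ :=
      CFC.exists_sqrt_of_isSelfAdjoint_of_quasispectrumRestricts hS.inv.posSemidef.isHermitian
        (QuasispectrumRestricts.nnreal_of_nonneg hS.inv.posSemidef.nonneg)
    have h2 := hX.star_eq
    rw [star_eq_conjTranspose, conjTranspose_eq_transpose_of_trivial] at h2
    exact ⟨X, by rw [h2]; exact h.symm⟩
  have hd := hS.det_pos
  have hdet : S.det⁻¹ = M.det ^ 2 := by
    have := congrArg Matrix.det hM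
    rw [Matrix.det_nonsing_inv, det_mul, det_transpose, Ring.inverse_eq_inv'] at this
    rw [this]; ring
  have hM0 : M.det ≠ 0 := by
    intro h
    rw [h] at hdet
    simp at hdet
    exact hd.ne' hdet
  unfold gaussPDF
  rw [integral_const_mul]
  rw [integral_sub_right_eq_self (μ := volume) (fun x : ι → ℝ => Real.exp (-(1 / 2 : ℝ) * (x ⬝ᵥ (S⁻¹ *ᵥ x)))) μ]
  have h2 : ∀ x : ι → ℝ, Real.exp (-(1 / 2 : ℝ) * (x ⬝ᵥ (S⁻¹ *ᵥ x)))
      = (fun z : ι → ℝ => ∏ i, Real.exp (-(1/2 : ℝ) * (z i)^2)) (Matrix.toLin' M x) := by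
    intro x
    beta_reduce
    rw [hM, ← Real.exp_sum, ← Finset.mul_sum, ← mulVec_mulVec, dotProduct_mulVec, vecMul_transpose]
    simp [dotProduct, sq]
  simp_rw [h2]
  have h3 := Real.map_matrix_volume_pi_eq_smul_volume_pi hM0
  have h4 := integral_map (μ := (volume : Measure (ι → ℝ))) (φ := Matrix.toLin' M)
    (f := fun z : ι → ℝ => ∏ i, Real.exp (-(1/2 : ℝ) * (z i)^2))
    (by
      have : Continuous (Matrix.toLin' M) := LinearMap.continuous_of_finiteDimensional _
      exact this.aemeasurable) (by
      apply Continuous.aestronglyMeasurable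
      fun_prop)
  rw [← h4, h3, integral_smul_measure, integral_fintype_prod_volume_eq_prod (fun (_ : ι) (z:ℝ) => Real.exp (-(1/2 : ℝ) * z^2))]
  rw [integral_gaussian, Finset.prod_const, Finset.card_univ, ENNReal.toReal_ofReal (abs_nonneg _)]
  have e1 : S.det ^ (-(1:ℝ)/2) = |M.det| := by
    have : S.det = (|M.det|^2)⁻¹ := by rw [sq_abs, ← hdet, inv_inv]
    rw [this, neg_div, Real.rpow_neg (by positivity), Real.inv_rpow (by positivity), inv_inv,
      ← Real.sqrt_eq_rpow, Real.sqrt_sq (abs_nonneg _)]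
  have e2 : (2 * π) ^ (-(Fintype.card ι : ℝ) / 2) = (√(π / (1 / 2)) ^ Fintype.card ι)⁻¹ := by
    rw [Real.sqrt_eq_rpow, ← Real.rpow_natCast, ← Real.rpow_mul (by positivity), ← Real.rpow_neg (by positivity)]
    congr 1 <;> ring
  rw [e1, e2, abs_inv]
  have : |M.det| ≠ 0 := by simpa using hM0
  have : √(π / (1 / 2)) ^ Fintype.card ι ≠ 0 := by positivity
  simp only [smul_eq_mul]
  field_simp

/-- Conditional factorisation. -/
theorem gaussPDF_blocks {ι κ : Type*} [Fintype ι] [DecidableEq ι] [Fintype κ] [DecidableEq κ]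
    (μ : ι → ℝ) (ν : κ → ℝ) (P : Matrix ι ι ℝ) (Q : Matrix ι κ ℝ) (R : Matrix κ κ ℝ)
    (hP : P.PosDef) (hR : (R - Qᵀ * P⁻¹ * Q).PosDef) (x : ι → ℝ) (y : κ → ℝ) :
    gaussPDF (Sum.elim μ ν) (fromBlocks P Q Qᵀ R) (Sum.elim x y) =
      gaussPDF μ P x * gaussPDF (ν + Qᵀ *ᵥ (P⁻¹ *ᵥ (x - μ))) (R - Qᵀ * P⁻¹ * Q) y := by
  have iP : Invertible P := hP.isUnit.invertible
  have iR : Invertible (R - Qᵀ * ⅟P * Q) := by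
    rw [invOf_eq_nonsing_inv]; exact hR.isUnit.invertible
  have iF : Invertible (fromBlocks P Q Qᵀ R) := fromBlocks₁₁Invertible P Q Qᵀ R
  have hPs : (P⁻¹)ᵀ = P⁻¹ := posDef_symm_aux hP.inv
  have hinv := invOf_fromBlocks₁₁_eq P Q Qᵀ R
  have hdet := det_fromBlocks₁₁ P Q Qᵀ R
  simp only [invOf_eq_nonsing_inv] at hinv hdet
  unfold gaussPDF
  rw [hinv, hdet, Real.mul_rpow hP.det_pos.le hR.det_pos.le, Fintype.card_sum]
  set K := (R - Qᵀ * P⁻¹ * Q) with hK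
  have hc : (2 * π) ^ (-((Fintype.card ι + Fintype.card κ : ℕ) : ℝ) / 2)
      = (2 * π) ^ (-(Fintype.card ι : ℝ) / 2) * (2 * π) ^ (-(Fintype.card κ : ℝ) / 2) := by
    rw [← Real.rpow_add (by positivity)]
    congr 1; push_cast; ring
  have hsub : (Sum.elim x y - Sum.elim μ ν : ι ⊕ κ → ℝ) = Sum.elim (x - μ) (y - ν) := by
    ext i; cases i <;> rfl
  have hq : Sum.elim (x - μ) (y - ν) ⬝ᵥ ((fromBlocks (P⁻¹ + P⁻¹ * Q * K⁻¹ * Qᵀ * P⁻¹)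
        (-(P⁻¹ * Q * K⁻¹)) (-(K⁻¹ * Qᵀ * P⁻¹)) K⁻¹) *ᵥ (Sum.elim (x - μ) (y - ν)))
      = (x - μ) ⬝ᵥ (P⁻¹ *ᵥ (x - μ)) + (y - (ν + Qᵀ *ᵥ (P⁻¹ *ᵥ (x - μ)))) ⬝ᵥ
        (K⁻¹ *ᵥ (y - (ν + Qᵀ *ᵥ (P⁻¹ *ᵥ (x - μ))))) := by
    generalize x - μ = a
    have : y - (ν + Qᵀ *ᵥ (P⁻¹ *ᵥ a)) = (y - ν) - Qᵀ *ᵥ (P⁻¹ *ᵥ a) := by abel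
    rw [this]
    generalize y - ν = b
    have key : ∀ w : κ → ℝ, a ⬝ᵥ (P⁻¹ *ᵥ (Q *ᵥ w)) = (Qᵀ *ᵥ (P⁻¹ *ᵥ a)) ⬝ᵥ w := by
      intro w
      rw [dotProduct_mulVec, dotProduct_mulVec, ← mulVec_transpose, ← mulVec_transpose, hPs]
    rw [fromBlocks_mulVec]
    simp only [Sum.elim_comp_inl, Sum.elim_comp_inr, sumElim_dotProduct_sumElim]
    simp only [add_mulVec, neg_mulVec, ← mulVec_mulVec, dotProduct_add, dotProduct_neg, key,
      mulVec_sub, dotProduct_sub, sub_dotProduct]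
    ring
  rw [hc, hsub, hq, mul_add, Real.exp_add]
  ring

theorem schur_posDef {ι κ : Type*} [Fintype ι] [DecidableEq ι] [Fintype κ] [DecidableEq κ]
    (P : Matrix ι ι ℝ) (Q : Matrix ι κ ℝ) (R : Matrix κ κ ℝ)
    (hP : P.PosDef) (h : (fromBlocks P Q Qᵀ R).PosDef) : (R - Qᵀ * P⁻¹ * Q).PosDef := by
  have iP : Invertible P := hP.isUnit.invertible
  have hPs : (P⁻¹)ᵀ = P⁻¹ := posDef_symm_aux hP.inv
  have h1 := fromBlocks_eq_of_invertible₁₁ P Q Qᵀ R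
  simp only [invOf_eq_nonsing_inv] at h1
  set V := fromBlocks (1 : Matrix ι ι ℝ) (P⁻¹ * Q) 0 (1 : Matrix κ κ ℝ) with hV
  have h2 : fromBlocks (1 : Matrix ι ι ℝ) 0 (Qᵀ * P⁻¹) (1 : Matrix κ κ ℝ) = star V := by
    rw [hV, star_eq_conjTranspose, conjTranspose_eq_transpose_of_trivial, fromBlocks_transpose]
    simp [hPs]
  rw [h2] at h1
  have hU : IsUnit V := by
    rw [Matrix.isUnit_iff_isUnit_det, hV, det_fromBlocks_zero₂₁]; simp
  rw [h1, Matrix.IsUnit.posDef_star_left_conjugate_iff hU] at h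
  have := h.submatrix (e := (Sum.inr : κ → ι ⊕ κ)) Sum.inr_injective
  exact this

theorem fromBlocks_posDef {ι κ : Type*} [Fintype ι] [DecidableEq ι] [Fintype κ] [DecidableEq κ]
    (P : Matrix ι ι ℝ) (Q : Matrix ι κ ℝ) (R : Matrix κ κ ℝ)
    (hP : P.PosDef) (h : (R - Qᵀ * P⁻¹ * Q).PosDef) : (fromBlocks P Q Qᵀ R).PosDef := by
  have iP : Invertible P := hP.isUnit.invertible
  have hPs : (P⁻¹)ᵀ = P⁻¹ := posDef_symm_aux hP.inv
  have h1 := fromBlocks_eq_of_invertible₁₁ P Q Qᵀ R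
  simp only [invOf_eq_nonsing_inv] at h1
  set V := fromBlocks (1 : Matrix ι ι ℝ) (P⁻¹ * Q) 0 (1 : Matrix κ κ ℝ) with hV
  have h2 : fromBlocks (1 : Matrix ι ι ℝ) 0 (Qᵀ * P⁻¹) (1 : Matrix κ κ ℝ) = star V := by
    rw [hV, star_eq_conjTranspose, conjTranspose_eq_transpose_of_trivial, fromBlocks_transpose]
    simp [hPs]
  rw [h2] at h1
  have hU : IsUnit V := by
    rw [Matrix.isUnit_iff_isUnit_det, hV, det_fromBlocks_zero₂₁]; simp
  rw [h1, Matrix.IsUnit.posDef_star_left_conjugate_iff hU]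
  refine PosDef.of_dotProduct_mulVec_pos ?_ ?_
  · rw [Matrix.IsHermitian, conjTranspose_eq_transpose_of_trivial, fromBlocks_transpose,
      posDef_symm_aux hP, posDef_symm_aux h]; simp
  · intro z hz
    obtain ⟨a, b, rfl⟩ : ∃ a b, z = Sum.elim a b := ⟨z ∘ Sum.inl, z ∘ Sum.inr, by simp⟩
    rw [fromBlocks_mulVec]
    simp only [Sum.elim_comp_inl, Sum.elim_comp_inr, star_trivial, zero_mulVec, add_zero, zero_add, sumElim_dotProduct_sumElim]
    have ha := hP.posSemidef.dotProduct_mulVec_nonneg a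
    have hb := h.posSemidef.dotProduct_mulVec_nonneg b
    simp only [star_trivial] at ha hb
    by_cases h0 : a = 0
    · have hb0 : b ≠ 0 := by
        rintro rfl
        apply hz; subst h0; ext i; cases i <;> rfl
      have := h.dotProduct_mulVec_pos hb0
      simp only [star_trivial] at this
      linarith
    · have := hP.dotProduct_mulVec_pos h0
      simp only [star_trivial] at this
      linarith

/-- Marginalisation. -/
theorem gaussPDF_marginal {ι κ τ : Type*} [Fintype ι] [DecidableEq ι] [Fintype κ] [DecidableEq κ]
    [Fintype τ] [DecidableEq τ] (e : ι ⊕ κ ≃ τ)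
    (μ : τ → ℝ) (S : Matrix τ τ ℝ) (hS : S.PosDef) (y : κ → ℝ) :
    ∫ x : ι → ℝ, gaussPDF μ S (fun t => Sum.elim x y (e.symm t)) =
      gaussPDF (fun k => μ (e (Sum.inr k)))
        (S.submatrix (fun k => e (Sum.inr k)) (fun k => e (Sum.inr k))) y := by
  set P := S.submatrix (fun k => e (Sum.inr k)) (fun k => e (Sum.inr k)) with hPdef
  set Q := S.submatrix (fun k => e (Sum.inr k)) (fun k => e (Sum.inl k)) with hQdef
  set R := S.submatrix (fun k => e (Sum.inl k)) (fun k => e (Sum.inl k)) with hRdef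
  let e' : κ ⊕ ι ≃ τ := (Equiv.sumComm κ ι).trans e
  have hsym := posDef_symm_aux hS
  have hSe : S.submatrix e' e' = fromBlocks P Q Qᵀ R := by
    ext i j
    rcases i with i | i <;> rcases j with j | j <;> simp [e', hPdef, hQdef, hRdef]
    conv_lhs => rw [← hsym]
    rfl
  have hP : P.PosDef := hS.submatrix (fun a b h => by simpa using h)
  have hF : (fromBlocks P Q Qᵀ R).PosDef := by rw [← hSe]; exact hS.submatrix e'.injective
  have hK := schur_posDef P Q R hP hF
  have : ∀ x : ι → ℝ, gaussPDF μ S (fun t => Sum.elim x y (e.symm t)) =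
      gaussPDF (fun k => μ (e (Sum.inr k))) P y *
        gaussPDF ((fun i => μ (e (Sum.inl i))) + Qᵀ *ᵥ (P⁻¹ *ᵥ (y - (fun k => μ (e (Sum.inr k))))))
          (R - Qᵀ * P⁻¹ * Q) x := by
    intro x
    rw [← gaussPDF_blocks _ _ _ _ _ hP hK, ← gaussPDF_reindex e' μ S, hSe]
    congr 1
    · ext i; cases i <;> simp [e']
    · ext i; cases i <;> simp [e']
  simp_rw [this]
  rw [integral_const_mul, gaussPDF_integral _ _ hK, mul_one]

/-- Joint of a Gaussian and a linear-Gaussian conditional. -/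
theorem joint_schur {ι κ : Type*} [Fintype ι] [DecidableEq ι] [Fintype κ] [DecidableEq κ]
    (S : Matrix ι ι ℝ) (C : Matrix κ ι ℝ) (B : Matrix κ κ ℝ) (hS : S.PosDef) :
    (B + C * S * Cᵀ) - (S * Cᵀ)ᵀ * S⁻¹ * (S * Cᵀ) = B := by
  have hu : IsUnit S.det := (Matrix.isUnit_iff_isUnit_det _).1 hS.isUnit
  rw [transpose_mul, transpose_transpose, posDef_symm_aux hS, Matrix.mul_assoc C S S⁻¹,
    Matrix.mul_nonsing_inv _ hu, Matrix.mul_one, ← Matrix.mul_assoc C S]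
  simp

theorem joint_posDef {ι κ : Type*} [Fintype ι] [DecidableEq ι] [Fintype κ] [DecidableEq κ]
    (S : Matrix ι ι ℝ) (C : Matrix κ ι ℝ) (B : Matrix κ κ ℝ) (hS : S.PosDef) (hB : B.PosDef) :
    (fromBlocks S (S * Cᵀ) (S * Cᵀ)ᵀ (B + C * S * Cᵀ)).PosDef := by
  apply fromBlocks_posDef _ _ _ hS
  rw [joint_schur _ _ _ hS]; exact hB

theorem gaussPDF_joint {ι κ : Type*} [Fintype ι] [DecidableEq ι] [Fintype κ] [DecidableEq κ]
    (μ : ι → ℝ) (S : Matrix ι ι ℝ) (C : Matrix κ ι ℝ) (B : Matrix κ κ ℝ) (hS : S.PosDef)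
    (hB : B.PosDef) (u : ι → ℝ) (f : κ → ℝ) :
    gaussPDF μ S u * gaussPDF (C *ᵥ u) B f =
      gaussPDF (Sum.elim μ (C *ᵥ μ)) (fromBlocks S (S * Cᵀ) (S * Cᵀ)ᵀ (B + C * S * Cᵀ))
        (Sum.elim u f) := by
  have hu : IsUnit S.det := (Matrix.isUnit_iff_isUnit_det _).1 hS.isUnit
  have hj := joint_schur S C B hS
  rw [gaussPDF_blocks _ _ _ _ _ hS (by rw [hj]; exact hB), hj]
  congr 2
  rw [mulVec_mulVec, transpose_mul, transpose_transpose, posDef_symm_aux hS, Matrix.mul_assoc,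
    Matrix.mul_nonsing_inv _ hu, Matrix.mul_one, mulVec_sub]
  abel

theorem uptoEquiv_bij (d : Fin L → ℕ) (l : Fin L) {p : ((i : Fin L) × Fin (d i)) → Prop}
    (hp : ∀ q, p q ↔ q.1 ≤ l) :
    Function.Bijective (Sum.elim (fun q => ⟨q.1, (hp _).2 q.2.le⟩)
      (fun a => ⟨⟨l, a⟩, (hp _).2 le_rfl⟩) : Below d l ⊕ Fin (d l) → {q // p q}) := by
  constructor
  · rintro (⟨⟨i, a⟩, ha⟩ | a) (⟨⟨j, b⟩, hb⟩ | b) h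
    · simp at h; obtain ⟨rfl, h⟩ := h; simp at h; subst h; rfl
    · simp at h; obtain ⟨rfl, h⟩ := h; exact absurd ha (lt_irrefl _)
    · simp at h; obtain ⟨rfl, h⟩ := h; exact absurd hb (lt_irrefl _)
    · simp at h; subst h; rfl
  · rintro ⟨⟨i, a⟩, h⟩
    rcases ((hp _).1 h).lt_or_eq with h1 | h1
    · exact ⟨Sum.inl ⟨⟨i, a⟩, h1⟩, rfl⟩
    · dsimp at h1; subst h1; exact ⟨Sum.inr a, rfl⟩

theorem gaussPDF_split {d : Fin L → ℕ} (μ : ((i : Fin L) × Fin (d i)) → ℝ)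
    (S : Matrix ((i : Fin L) × Fin (d i)) ((i : Fin L) × Fin (d i)) ℝ) (hS : S.PosDef)
    (x : ((i : Fin L) × Fin (d i)) → ℝ) (l : Fin L)
    {p : ((i : Fin L) × Fin (d i)) → Prop} [DecidablePred p] (hp : ∀ q, p q ↔ q.1 ≤ l) :
    gaussPDF (fun q : {q // p q} => μ q.1) (S.submatrix Subtype.val Subtype.val) (fun q => x q.1)
      = gaussPDF (belowVec μ l) (prevBlock S l) (belowVec x l) *
        gaussPDF (muHat μ S x l) (sigmaHat S l) (blockVec x l) := by
  let e := Equiv.ofBijective _ (uptoEquiv_bij d l hp)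
  have hsym := posDef_symm_aux hS
  have hrow : (colBlock S l)ᵀ = rowBlock S l := by
    ext i q; exact congrFun (congrFun hsym _) _
  have hSe : (S.submatrix (Subtype.val : {q // p q} → _) Subtype.val).submatrix e e =
      fromBlocks (prevBlock S l) (colBlock S l) (colBlock S l)ᵀ (diagBlock S l) := by
    rw [hrow]
    ext i j
    rcases i with i | i <;> rcases j with j | j <;> rfl
  have hP : (prevBlock S l).PosDef := hS.submatrix Subtype.val_injective
  have hF : (fromBlocks (prevBlock S l) (colBlock S l) (colBlock S l)ᵀ (diagBlock S l)).PosDef := by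
    rw [← hSe]; exact (hS.submatrix Subtype.val_injective).submatrix e.injective
  have hK := schur_posDef _ _ _ hP hF
  have hb := gaussPDF_blocks (belowVec μ l) (blockVec μ l) _ _ _ hP hK (belowVec x l) (blockVec x l)
  rw [← hSe, hrow] at hb
  rw [← gaussPDF_reindex e]
  refine Eq.trans ?_ hb
  congr 1
  · ext i; cases i <;> rfl
  · ext i; cases i <;> rfl

theorem gaussPDF_chain {d : Fin L → ℕ} (μ : ((i : Fin L) × Fin (d i)) → ℝ)
    (S : Matrix ((i : Fin L) × Fin (d i)) ((i : Fin L) × Fin (d i)) ℝ) (hS : S.PosDef)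
    (x : ((i : Fin L) × Fin (d i)) → ℝ) (n : ℕ) (hn : n ≤ L) :
    gaussPDF (fun q : {q : (i : Fin L) × Fin (d i) // q.1.val < n} => μ q.1)
      (S.submatrix Subtype.val Subtype.val) (fun q => x q.1)
      = ∏ l ∈ Finset.univ.filter (fun l : Fin L => l.val < n),
        gaussPDF (muHat μ S x l) (sigmaHat S l) (blockVec x l) := by
  induction n with
  | zero =>
    have : IsEmpty {q : (i : Fin L) × Fin (d i) // q.1.val < 0} := ⟨fun q => absurd q.2 (by simp)⟩
    simp [gaussPDF]
  | succ n ih =>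
    have hs := gaussPDF_split μ S hS x ⟨n, hn⟩ (p := fun q => q.1.val < n + 1)
      (fun q => by rw [Fin.le_def]; exact Nat.lt_succ_iff)
    rw [hs]
    have hf : Finset.univ.filter (fun l : Fin L => l.val < n + 1) =
        insert ⟨n, hn⟩ (Finset.univ.filter (fun l : Fin L => l.val < n)) := by
      ext l; simp [Fin.ext_iff]; omega
    rw [hf, Finset.prod_insert (by simp), mul_comm, ← ih (by omega)]
    congr 1

theorem gaussPDF_chain_below {d : Fin L → ℕ} (μ : ((i : Fin L) × Fin (d i)) → ℝ)
    (S : Matrix ((i : Fin L) × Fin (d i)) ((i : Fin L) × Fin (d i)) ℝ) (hS : S.PosDef)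
    (x : ((i : Fin L) × Fin (d i)) → ℝ) (l : Fin L) :
    gaussPDF (belowVec μ l) (prevBlock S l) (belowVec x l)
      = ∏ l' ∈ Finset.univ.filter (fun l' : Fin L => l' < l),
        gaussPDF (muHat μ S x l') (sigmaHat S l') (blockVec x l') := by
  have h := gaussPDF_chain μ S hS x l.val l.2.le
  have hf : Finset.univ.filter (fun l' : Fin L => l'.val < l.val) =
      Finset.univ.filter (fun l' : Fin L => l' < l) := by
    exact Finset.filter_congr (fun _ _ => Fin.lt_def.symm)
  rw [hf] at h
  rw [← h]
  rfl

theorem gaussPDF_chain_upto {d : Fin L → ℕ} (μ : ((i : Fin L) × Fin (d i)) → ℝ)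
    (S : Matrix ((i : Fin L) × Fin (d i)) ((i : Fin L) × Fin (d i)) ℝ) (hS : S.PosDef)
    (x : ((i : Fin L) × Fin (d i)) → ℝ) (l : Fin L) :
    gaussPDF (fun q : {q : (i : Fin L) × Fin (d i) // q.1 ≤ l} => μ q.1)
      (S.submatrix Subtype.val Subtype.val) (fun q => x q.1)
      = ∏ l' ∈ Finset.univ.filter (fun l' : Fin L => l' ≤ l),
        gaussPDF (muHat μ S x l') (sigmaHat S l') (blockVec x l') := by
  have hf : Finset.univ.filter (fun l' : Fin L => l' ≤ l) =
      insert l (Finset.univ.filter (fun l' : Fin L => l' < l)) := by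
    ext l'; simp [le_iff_eq_or_lt]
  rw [gaussPDF_split μ S hS x l (fun q => Iff.rfl), gaussPDF_chain_below μ S hS x l, hf,
    Finset.prod_insert (by simp), mul_comm]

theorem blockDiag_posDef {d : Fin L → ℕ} (B : ∀ l, Matrix (Fin (d l)) (Fin (d l)) ℝ)
    (hB : ∀ l, (B l).PosDef) : (blockDiagonal' B).PosDef := by
  refine PosDef.of_dotProduct_mulVec_pos ?_ ?_
  · rw [Matrix.IsHermitian, blockDiagonal'_conjTranspose]
    congr 1; ext1 l; exact (hB l).isHermitian
  · intro x hx
    have hv : ∀ i a, (blockDiagonal' B *ᵥ x) ⟨i, a⟩ = (B i *ᵥ blockVec x i) a := by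
      intro i a
      simp only [mulVec, dotProduct, blockVec]
      rw [Fintype.sum_sigma, Finset.sum_eq_single i]
      · simp
      · intro j _ hj
        apply Finset.sum_eq_zero
        intro b _
        rw [blockDiagonal'_apply_ne _ _ _ hj.symm, zero_mul]
      · simp
    have hs : star x ⬝ᵥ (blockDiagonal' B *ᵥ x) =
        ∑ i, star (blockVec x i) ⬝ᵥ (B i *ᵥ blockVec x i) := by
      simp only [star_trivial]
      rw [dotProduct, Fintype.sum_sigma]
      simp only [hv]
      rfl
    rw [hs]
    obtain ⟨⟨i, a⟩, hia⟩ : ∃ q, x q ≠ 0 := by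
      by_contra h
      push Not at h
      exact hx (funext h)
    apply Finset.sum_pos' (fun i _ => (hB i).posSemidef.dotProduct_mulVec_nonneg _)
    exact ⟨i, Finset.mem_univ _, (hB i).dotProduct_mulVec_pos (fun h => hia (congrFun h a))⟩

theorem blockDiag_mul_apply {d m : Fin L → ℕ} {κ : Type*}
    (A : ∀ l, Matrix (Fin (d l)) (Fin (m l)) ℝ) (M : Matrix ((i : Fin L) × Fin (m i)) κ ℝ)
    (i : Fin L) (a : Fin (d i)) (k : κ) :
    (blockDiagonal' A * M) ⟨i, a⟩ k = ∑ c, A i a c * M ⟨i, c⟩ k := by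
  rw [Matrix.mul_apply, Fintype.sum_sigma, Finset.sum_eq_single i]
  · simp
  · intro j _ hj
    apply Finset.sum_eq_zero
    intro b _
    rw [blockDiagonal'_apply_ne _ _ _ hj.symm, zero_mul]
  · simp

theorem blockDiag_mulVec_apply {d m : Fin L → ℕ}
    (A : ∀ l, Matrix (Fin (d l)) (Fin (m l)) ℝ) (v : ((i : Fin L) × Fin (m i)) → ℝ)
    (i : Fin L) (a : Fin (d i)) :
    (blockDiagonal' A *ᵥ v) ⟨i, a⟩ = (A i *ᵥ fun c => v ⟨i, c⟩) a := by
  simp only [mulVec, dotProduct]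
  rw [Fintype.sum_sigma, Finset.sum_eq_single i]
  · simp
  · intro j _ hj
    apply Finset.sum_eq_zero
    intro b _
    rw [blockDiagonal'_apply_ne _ _ _ hj.symm, zero_mul]
  · simp

theorem Stilde_eq (T : Fin (L + 1) → ℕ) (m : Fin L → ℕ)
    (A : ∀ l : Fin L, (Fin (T l.castSucc) → ℝ) → Matrix (Fin (T l.succ)) (Fin (m l)) ℝ)
    (B : ∀ l : Fin L, (Fin (T l.castSucc) → ℝ) → Matrix (Fin (T l.succ)) (Fin (T l.succ)) ℝ)
    (SM : Matrix ((i : Fin L) × Fin (m i)) ((i : Fin L) × Fin (m i)) ℝ)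
    (f : ∀ l : Fin (L + 1), Fin (T l) → ℝ) :
    Stilde T m A B SM f = blockDiagonal' (fun l => B l (f l.castSucc)) +
      blockDiagonal' (fun l => A l (f l.castSucc)) * SM *
        (blockDiagonal' (fun l => A l (f l.castSucc)))ᵀ := by
  ext ⟨i, a⟩ ⟨j, b⟩
  rw [Matrix.add_apply, Stilde, Matrix.of_apply]
  congr 1
  · by_cases h : i = j
    · subst h; simp
    · rw [blockDiagonal'_apply_ne _ _ _ h, dif_neg h]
  · change (A i (f i.castSucc) * SMblock SM i j * (A j (f j.castSucc))ᵀ) a b = _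
    rw [Matrix.mul_assoc (blockDiagonal' _), blockDiag_mul_apply, Matrix.mul_assoc,
      Matrix.mul_apply]
    apply Finset.sum_congr rfl
    intro c _
    congr 1
    rw [← Matrix.transpose_apply (SM * _), transpose_mul, transpose_transpose,
      blockDiag_mul_apply, Matrix.mul_apply]
    apply Finset.sum_congr rfl
    intro k _
    simp [SMblock, mul_comm]

theorem Dmat_mul_apply (T : Fin (L + 1) → ℕ) (m : Fin L → ℕ)
    (A : ∀ l : Fin L, (Fin (T l.castSucc) → ℝ) → Matrix (Fin (T l.succ)) (Fin (m l)) ℝ)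
    (SM : Matrix ((i : Fin L) × Fin (m i)) ((i : Fin L) × Fin (m i)) ℝ)
    (f : ∀ l : Fin (L + 1), Fin (T l) → ℝ) (l : Fin L) (q : Below (fun i => T i.succ) l)
    (a : AboveM m l) :
    (Dmat T m A f l * SMba SM l) q a =
      (blockDiagonal' (fun l => A l (f l.castSucc)) * SM) q.1 a.1 := by
  rw [Matrix.mul_apply, Matrix.mul_apply,
    ← Fintype.sum_subtype_add_sum_subtype (fun k : (i : Fin L) × Fin (m i) => k.1 < l)]
  rw [eq_comm, add_eq_left.2]
  · apply Finset.sum_congr rfl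
    rintro ⟨⟨j, b⟩, hk⟩ _
    obtain ⟨⟨i, c⟩, hq⟩ := q
    congr 1
    rw [Dmat, Matrix.of_apply]
    by_cases h : i = j
    · subst h; simp
    · rw [blockDiagonal'_apply_ne _ _ _ h, dif_neg h]
  · apply Finset.sum_eq_zero
    rintro ⟨⟨j, b⟩, hk⟩ _
    obtain ⟨⟨i, c⟩, hq⟩ := q
    rw [blockDiagonal'_apply_ne, zero_mul]
    rintro rfl
    exact hk hq

theorem gaussPDF_blockDiag_upto {d : Fin L → ℕ} (μ : ((i : Fin L) × Fin (d i)) → ℝ)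
    (B : ∀ l, Matrix (Fin (d l)) (Fin (d l)) ℝ)
    (hB : ∀ l, (B l).PosDef)
    (x : ((i : Fin L) × Fin (d i)) → ℝ) (l : Fin L) :
    gaussPDF (fun q : {q : (i : Fin L) × Fin (d i) // q.1 ≤ l} => μ q.1)
      ((blockDiagonal' B).submatrix Subtype.val Subtype.val) (fun q => x q.1)
      = ∏ l' ∈ Finset.univ.filter (fun l' : Fin L => l' ≤ l),
        gaussPDF (blockVec μ l') (B l') (blockVec x l') := by
  rw [gaussPDF_chain_upto μ _ (blockDiag_posDef B hB) x l]
  apply Finset.prod_congr rfl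
  intro l' _
  have h0 : rowBlock (blockDiagonal' B) l' = 0 := by
    ext i q
    exact blockDiagonal'_apply_ne B i q.1.2 q.2.ne'
  have h1 : diagBlock (blockDiagonal' B) l' = B l' := by
    ext i j; simp [diagBlock]
  rw [muHat, sigmaHat, h0, h1]
  simp

theorem bigEquiv_bij (d m : Fin L → ℕ) (l : Fin L) :
    Function.Bijective (Sum.elim (fun k => Sum.inl k.1)
      (Sum.elim (fun q => Sum.inr ⟨q.1, q.2.le⟩)
        (Sum.elim (fun a => Sum.inr ⟨⟨l, a⟩, le_rfl⟩) (fun k => Sum.inl k.1))) :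
      UptoM m l ⊕ (Below d l ⊕ (Fin (d l) ⊕ AboveM m l)) →
        ((i : Fin L) × Fin (m i)) ⊕ {q : (i : Fin L) × Fin (d i) // q.1 ≤ l}) := by
  have hb := uptoEquiv_bij d l (p := fun q => q.1 ≤ l) (fun _ => Iff.rfl)
  constructor
  · rintro (k | q | a | k) (k' | q' | a' | k') h <;> simp at h
    · exact congrArg _ (Subtype.ext h)
    · exact absurd (h ▸ k.2) (not_le.2 k'.2)
    · exact congrArg _ (congrArg _ (Subtype.ext h))
    · have := @hb.1 (Sum.inl q) (Sum.inr a') (Subtype.ext h)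
      cases this
    · have := @hb.1 (Sum.inr a) (Sum.inl q') (Subtype.ext h)
      cases this
    · subst h; rfl
    · exact absurd (h ▸ k.2) (not_lt.2 k'.2)
    · exact congrArg _ (congrArg _ (congrArg _ (Subtype.ext h)))
  · rintro (k | q)
    · by_cases h : k.1 ≤ l
      · exact ⟨Sum.inl ⟨k, h⟩, rfl⟩
      · exact ⟨Sum.inr (Sum.inr (Sum.inr ⟨k, not_le.1 h⟩)), rfl⟩
    · obtain ⟨s, rfl⟩ := hb.2 q
      rcases s with s | s
      · exact ⟨Sum.inr (Sum.inl s), rfl⟩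
      · exact ⟨Sum.inr (Sum.inr (Sum.inl s)), rfl⟩

/-- **Lemma 1 (layerwise marginalisation of the inducing outputs).**  For every layer `l`
the block matrix `Γ^l` is symmetric positive definite, and integrating the inducing
outputs of layers `1, …, l` out of `q(f_M) ∏_{l'≤l} p(f^{l'} | f_M^{l'}; f^{l'−1})`
yields `[∏_{l'<l} N(f^{l'}; μ̂^{l'}, Σ̂^{l'})] ·
N((f^l, f_M^{l+1:L}); (μ̂^l, μ̂_M^{(l)}), Γ^l)`. -/
theorem deep_gp_layerwise_marginalisation (L : ℕ) (hL : 1 ≤ L)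
    (T : Fin (L + 1) → ℕ) (m : Fin L → ℕ)
    (μM : ((i : Fin L) × Fin (m i)) → ℝ)
    (SM : Matrix ((i : Fin L) × Fin (m i)) ((i : Fin L) × Fin (m i)) ℝ)
    (hSM : SM.PosDef)
    (A : ∀ l : Fin L, (Fin (T l.castSucc) → ℝ) → Matrix (Fin (T l.succ)) (Fin (m l)) ℝ)
    (B : ∀ l : Fin L, (Fin (T l.castSucc) → ℝ) → Matrix (Fin (T l.succ)) (Fin (T l.succ)) ℝ)
    (hAmeas : ∀ l i j, Measurable fun x => A l x i j)
    (hBmeas : ∀ l i j, Measurable fun x => B l x i j)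
    (hBpd : ∀ l x, (B l x).PosDef)
    (hInv : ∀ (f : ∀ l : Fin (L + 1), Fin (T l) → ℝ) (l : Fin L),
      IsUnit (prevBlock (Stilde T m A B SM f) l).det) :
    ∀ f : ∀ l : Fin (L + 1), Fin (T l) → ℝ, ∀ l : Fin L,
      (Gam T m A B SM f l).PosDef ∧
      ∀ y : AboveM m l → ℝ,
        (∫ x : UptoM m l → ℝ,
            gaussPDF μM SM (combineInd m l x y) *
              ∏ l' ∈ Finset.univ.filter fun l' : Fin L => l' ≤ l,
                gaussPDF (A l' (f l'.castSucc) *ᵥ fun a => combineInd m l x y ⟨l', a⟩)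
                  (B l' (f l'.castSucc)) (f l'.succ)) =
          (∏ l' ∈ Finset.univ.filter fun l' : Fin L => l' < l,
              gaussPDF
                (muHat (muTilde T m A μM f) (Stilde T m A B SM f)
                  (fun p => f p.1.succ p.2) l')
                (sigmaHat (Stilde T m A B SM f) l') (f l'.succ)) *
            gaussPDF
              (Sum.elim
                (muHat (muTilde T m A μM f) (Stilde T m A B SM f)
                  (fun p => f p.1.succ p.2) l)
                (muHatM T m A B SM μM f l))
              (Gam T m A B SM f l) (Sum.elim (f l.succ) y) := by
  intro f l
  set D := blockDiagonal' (fun l => A l (f l.castSucc)) with hD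
  set Bd := blockDiagonal' (fun l => B l (f l.castSucc)) with hBd
  have hBdpd : Bd.PosDef := blockDiag_posDef _ (fun l => hBpd l _)
  have hSt := Stilde_eq T m A B SM f
  rw [← hD, ← hBd] at hSt
  have hStpd : (Stilde T m A B SM f).PosDef := by
    rw [hSt]
    apply hBdpd.add_posSemidef
    have := hSM.posSemidef.mul_mul_conjTranspose_same D
    rwa [conjTranspose_eq_transpose_of_trivial] at this
  set St := Stilde T m A B SM f with hStdef
  have hmu : D *ᵥ μM = muTilde T m A μM f := by
    ext ⟨i, a⟩
    exact blockDiag_mulVec_apply _ _ _ _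
  let I := {q : (i : Fin L) × Fin (T i.succ) // q.1 ≤ l}
  let C : Matrix I ((i : Fin L) × Fin (m i)) ℝ := D.submatrix Subtype.val id
  let BI : Matrix I I ℝ := Bd.submatrix Subtype.val Subtype.val
  have hBI : BI.PosDef := hBdpd.submatrix Subtype.val_injective
  have hJpd := joint_posDef SM C BI hSM hBI
  set J := fromBlocks SM (SM * Cᵀ) (SM * Cᵀ)ᵀ (BI + C * SM * Cᵀ) with hJ
  have hSMs := posDef_symm_aux hSM
  have hSts := posDef_symm_aux hStpd
  have hCt : (SM * Cᵀ)ᵀ = C * SM := by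
    rw [transpose_mul, transpose_transpose, hSMs]
  have J11 : ∀ a b, J (Sum.inl a) (Sum.inl b) = SM a b := fun a b => rfl
  have J22 : ∀ a b, J (Sum.inr a) (Sum.inr b) = St a.1 b.1 := by
    intro a b
    rw [hSt]; rfl
  have J21 : ∀ a b, J (Sum.inr a) (Sum.inl b) = (D * SM) a.1 b := by
    intro a b
    change (SM * Cᵀ)ᵀ a b = _
    rw [hCt]; rfl
  have J12 : ∀ a b, J (Sum.inl b) (Sum.inr a) = (D * SM) a.1 b := by
    intro a b
    rw [← J21]; rfl
  let e := Equiv.ofBijective _ (bigEquiv_bij (fun i => T i.succ) m l)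
  let P := prevBlock St l
  let Q : Matrix (Below (fun i => T i.succ) l) (Fin (T l.succ) ⊕ AboveM m l) ℝ :=
    fromCols (colBlock St l) (Dmat T m A f l * SMba SM l)
  let R : Matrix (Fin (T l.succ) ⊕ AboveM m l) (Fin (T l.succ) ⊕ AboveM m l) ℝ :=
    fromBlocks (diagBlock St l) (A l (f l.castSucc) * SMla SM l)
      (A l (f l.castSucc) * SMla SM l)ᵀ (SMaa SM l)
  have hrow : (colBlock St l)ᵀ = rowBlock St l := by
    ext i q; exact congrFun (congrFun hSts _) _
  have hab : (SMba SM l)ᵀ = SMab SM l := by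
    ext i q; exact congrFun (congrFun hSMs _) _
  have hQt : Qᵀ = fromRows (rowBlock St l) (SMab SM l * (Dmat T m A f l)ᵀ) := by
    rw [transpose_fromCols, hrow, transpose_mul, hab]
  have hAl : ∀ i (a : AboveM m l), (A l (f l.castSucc) * SMla SM l) i a = (D * SM) ⟨l, i⟩ a.1 := by
    intro i a
    rw [blockDiag_mul_apply]; rfl
  have hDm := Dmat_mul_apply T m A SM f l
  have hsub : J.submatrix (fun k => e (Sum.inr k)) (fun k => e (Sum.inr k)) =
      fromBlocks P Q Qᵀ R := by
    ext i j
    rcases i with i | i | i <;> rcases j with j | j | j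
    · exact J22 _ _
    · exact J22 _ _
    · exact (J12 _ _).trans (hDm _ _).symm
    · rw [hQt]; exact J22 _ _
    · exact J22 _ _
    · exact (J12 _ _).trans (hAl _ _).symm
    · exact (J21 _ _).trans (hDm _ _).symm
    · exact (J21 _ _).trans (hAl _ _).symm
    · exact J11 _ _
  have hP : P.PosDef := hStpd.submatrix Subtype.val_injective
  have hPs : (P⁻¹)ᵀ = P⁻¹ := posDef_symm_aux hP.inv
  have hF : (fromBlocks P Q Qᵀ R).PosDef := by
    rw [← hsub]
    exact hJpd.submatrix (fun a b h => by simpa using h)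
  have hK := schur_posDef P Q R hP hF
  have hG : R - Qᵀ * P⁻¹ * Q = Gam T m A B SM f l := by
    rw [hQt, Gam, fromRows_mul, fromRows_mul_fromCols, sub_eq_add_neg, fromBlocks_neg, fromBlocks_add]
    simp only [← sub_eq_add_neg]
    congr 1
    · rw [sigHatNM, ← Matrix.mul_assoc]
    · rw [sigHatNM, transpose_sub]
      congr 1
      rw [transpose_mul, transpose_mul, transpose_mul, hab, hPs, ← hrow, transpose_transpose]
      simp only [Matrix.mul_assoc]
    · rw [sigHatM]
      simp only [Matrix.mul_assoc]
      rfl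
  refine ⟨hG ▸ hK, fun y => ?_⟩
  set F : ((l : Fin L) × Fin (T l.succ)) → ℝ := fun p => f p.1.succ p.2 with hFdef
  have hint : ∀ x : UptoM m l → ℝ,
      gaussPDF μM SM (combineInd m l x y) *
              ∏ l' ∈ Finset.univ.filter fun l' : Fin L => l' ≤ l,
                gaussPDF (A l' (f l'.castSucc) *ᵥ fun a => combineInd m l x y ⟨l', a⟩)
                  (B l' (f l'.castSucc)) (f l'.succ)
      = gaussPDF (Sum.elim μM (C *ᵥ μM)) J
        (fun t => Sum.elim x (Sum.elim (belowVec F l) (Sum.elim (f l.succ) y)) (e.symm t)) := by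
    intro x
    have h1 := gaussPDF_blockDiag_upto (D *ᵥ combineInd m l x y)
      (fun l => B l (f l.castSucc)) (fun l => hBpd l _) F l
    have h2 : ∀ l', blockVec (D *ᵥ combineInd m l x y) l' =
        (A l' (f l'.castSucc) *ᵥ fun a => combineInd m l x y ⟨l', a⟩) := by
      intro l'
      ext a
      exact blockDiag_mulVec_apply _ _ _ _
    simp only [h2] at h1
    have h3 := gaussPDF_joint μM SM C BI hSM hBI (combineInd m l x y) (fun q : I => F q.1)
    refine Eq.trans (congrArg _ h1.symm) (Eq.trans h3 ?_)
    congr 1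
    funext t
    obtain ⟨s, rfl⟩ := e.surjective t
    rw [Equiv.symm_apply_apply]
    rcases s with s | s | s | s
    · exact dif_pos s.2
    · rfl
    · rfl
    · exact dif_neg (not_le.2 s.2)
  simp_rw [hint]
  rw [gaussPDF_marginal e _ J hJpd, hsub]
  have hmean : (fun k => (Sum.elim μM (C *ᵥ μM) : _ → ℝ) (e (Sum.inr k))) =
      Sum.elim (belowVec (muTilde T m A μM f) l)
        (Sum.elim (blockVec (muTilde T m A μM f) l) (fun a => μM a.1)) := by
    rw [← hmu]
    ext k
    rcases k with k | k | k <;> rfl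
  rw [hmean, gaussPDF_blocks _ _ _ _ _ hP hK, hG, gaussPDF_chain_below _ _ hStpd]
  have hm2 : (Sum.elim (blockVec (muTilde T m A μM f) l) (fun a : AboveM m l => μM a.1) +
      Qᵀ *ᵥ (P⁻¹ *ᵥ (belowVec F l - belowVec (muTilde T m A μM f) l))) =
      Sum.elim (muHat (muTilde T m A μM f) St F l) (muHatM T m A B SM μM f l) := by
    rw [hQt, fromRows_mulVec]
    ext k
    rcases k with k | k <;> rfl
  rw [hm2]
  rfl

end
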